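/- arXiv:2302.03472 — 10 statements merged into one kernel-verified Lean document; each statement's English description precedes it below -/
import Mathlib

section
/- For any ranked list of N₊ positive and N₋ negative items with N₊ > K and N₋ > K, the quantity (N₊+K)² − 4·N₊·N₋·OPAUC(β) is nonnegative, and Recall@K ≥ (1/N₊)·⌊(N₊ + K − √((N₊+K)² − 4·N₊·N₋·OPAUC(β)))/2⌋, where β = K/N₋, ⌊·⌋ is the integer floor, and √ is the real square root. -/
/-!
Write `t` for the number of positives among the top `K` ranks. Exactly `K - t` negatives lie in
the top `K` ranks; each of them is a top-`K` negative and has at most `t` positives before it.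
There are at most `K` top-`K` negatives (`card_topKNeg_le`), so at most `t` of them lie beyond
rank `K`, and each of those has at most `N₊` positives before it. Hence
`C ≤ (K - t) t + t N₊ = t (N₊ + K - t)` (`pairCount_le`).
With `S = N₊ + K` this gives `S² - 4C ≥ (S - 2t)² ≥ 0`, so `√(S² - 4C) ≥ S - 2t`, that is
`(S - √(S² - 4C)) / 2 ≤ t`; taking the floor only decreases the left-hand side.
-/

/-- The set of top-`K` negatives in a ranked list of `N` items (`pos i = true`
means position `i` holds a positive item; smaller index means better rank):
the negative positions that have fewer than `K` negatives strictly before them. -/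
def topKNeg (N K : ℕ) (pos : Fin N → Bool) : Finset (Fin N) :=
  Finset.univ.filter fun j => pos j = false ∧
    (Finset.univ.filter fun j' => pos j' = false ∧ j' < j).card < K

/-- The pair count `C`: the number of pairs `(i, j)` with `i` positive, `j` a
top-`K` negative, and `i` ranked before `j`. -/
def pairCount (N K : ℕ) (pos : Fin N → Bool) : ℕ :=
  (Finset.univ.filter fun p : Fin N × Fin N =>
    pos p.1 = true ∧ p.2 ∈ topKNeg N K pos ∧ p.1 < p.2).card

/-- The number `t` of positive items among the top `K` ranks. -/
def topKPos (N K : ℕ) (pos : Fin N → Bool) : ℕ :=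
  (Finset.univ.filter fun i : Fin N => pos i = true ∧ (i : ℕ) < K).card

/-- The number of negatives strictly before a negative determines that negative, so it embeds
the top-`K` negatives into `{0, …, K - 1}`. -/
theorem card_topKNeg_le (N K : ℕ) (pos : Fin N → Bool) : (topKNeg N K pos).card ≤ K := by
  have hlt : ∀ a b : Fin N, pos a = false → a < b →
      (Finset.univ.filter fun j' => pos j' = false ∧ j' < a).card <
        (Finset.univ.filter fun j' => pos j' = false ∧ j' < b).card := by
    intro a b ha hab
    apply Finset.card_lt_card
    rw [Finset.ssubset_iff_of_subset]
    · exact ⟨a, by simp [ha, hab], by simp⟩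
    · intro x hx
      simp only [Finset.mem_filter, Finset.mem_univ, true_and] at hx ⊢
      exact ⟨hx.1, hx.2.trans hab⟩
  conv_rhs => rw [← Finset.card_range K]
  apply Finset.card_le_card_of_injOn
    (fun j => (Finset.univ.filter fun j' => pos j' = false ∧ j' < j).card)
  · intro j hj
    simpa using (Finset.mem_filter.mp hj).2.2
  · intro a ha b hb hab
    have ha' := (Finset.mem_filter.mp ha).2.1
    have hb' := (Finset.mem_filter.mp hb).2.1
    rcases lt_trichotomy a b with h | h | h
    · exact absurd hab (hlt a b ha' h).ne
    · exact h
    · exact absurd hab (hlt b a hb' h).ne'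

/-- Fibering the pairs over their negative item. -/
theorem pairCount_eq_sum (N K : ℕ) (pos : Fin N → Bool) :
    pairCount N K pos =
      ∑ j ∈ topKNeg N K pos, (Finset.univ.filter fun i => pos i = true ∧ i < j).card := by
  unfold pairCount
  rw [Finset.card_eq_sum_card_fiberwise (f := Prod.snd) (t := topKNeg N K pos)]
  · refine Finset.sum_congr rfl fun j hj => ?_
    refine Finset.card_bij' (fun p _ => p.1) (fun i _ => (i, j)) ?_ ?_ ?_ ?_
    · rintro ⟨i, j'⟩ h
      simp only [Finset.mem_filter, Finset.mem_univ, true_and] at h ⊢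
      obtain ⟨⟨h1, h2, h3⟩, rfl⟩ := h
      exact ⟨h1, h3⟩
    · intro i h
      simp only [Finset.mem_filter, Finset.mem_univ, true_and, and_true] at h ⊢
      exact ⟨h.1, hj, h.2⟩
    · rintro ⟨i, j'⟩ h
      simp only [Finset.mem_filter] at h
      simp [h.2]
    · intro i h
      rfl
  · intro p hp
    exact (Finset.mem_filter.mp hp).2.2.1

/-- Every top-`K` rank holds either a positive or a top-`K` negative: a negative there has fewer
than `K` items of any kind before it. -/
theorem card_topKNeg_top_add_topKPos (N K : ℕ) (hK : K ≤ N) (pos : Fin N → Bool) :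
    ((topKNeg N K pos).filter fun j : Fin N => (j : ℕ) < K).card + topKPos N K pos = K := by
  have hcard : (Finset.univ.filter fun i : Fin N => (i : ℕ) < K).card = K := by
    rw [Fin.card_filter_val_lt]
    exact min_eq_right hK
  have hneg : ((topKNeg N K pos).filter fun j : Fin N => (j : ℕ) < K) =
      (Finset.univ.filter fun i : Fin N => (i : ℕ) < K).filter fun i => ¬ pos i = true := by
    ext j
    simp only [topKNeg, Finset.mem_filter, Finset.mem_univ, true_and, Bool.not_eq_true]
    refine ⟨fun h => ⟨h.2, h.1.1⟩, fun h => ⟨⟨h.2, lt_of_le_of_lt ?_ h.1⟩, h.1⟩⟩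
    calc (Finset.univ.filter fun j' => pos j' = false ∧ j' < j).card
        ≤ (Finset.Iio j).card := Finset.card_le_card fun x hx => by
          simpa using (Finset.mem_filter.mp hx).2.2
      _ = j := Fin.card_Iio j
  have hp : topKPos N K pos =
      ((Finset.univ.filter fun i : Fin N => (i : ℕ) < K).filter fun i => pos i = true).card := by
    unfold topKPos
    rw [Finset.filter_filter]
    simp only [and_comm]
  rw [hneg, hp, add_comm, Finset.card_filter_add_card_filter_not, hcard]

/-- `C ≤ (K - t) t + t N₊`, stated additively to avoid truncated subtraction. -/
theorem pairCount_le (N K Np : ℕ) (hK : K ≤ N) (pos : Fin N → Bool)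
    (hpos : (Finset.univ.filter fun i => pos i = true).card = Np) :
    pairCount N K pos + topKPos N K pos * topKPos N K pos ≤ topKPos N K pos * (Np + K) := by
  have hsplit := Finset.card_filter_add_card_filter_not (s := topKNeg N K pos)
    (fun j : Fin N => (j : ℕ) < K)
  have hle := card_topKNeg_le N K pos
  have htop := card_topKNeg_top_add_topKPos N K hK pos
  have hsum := pairCount_eq_sum N K pos
  rw [← Finset.sum_filter_add_sum_filter_not _ (fun j : Fin N => (j : ℕ) < K)] at hsum
  have h1 : ∑ j ∈ (topKNeg N K pos).filter (fun j : Fin N => (j : ℕ) < K),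
      (Finset.univ.filter fun i => pos i = true ∧ i < j).card ≤
      ((topKNeg N K pos).filter fun j : Fin N => (j : ℕ) < K).card * topKPos N K pos := by
    refine Finset.sum_le_card_nsmul _ _ _ fun j hj => Finset.card_le_card fun i hi => ?_
    have hjK := (Finset.mem_filter.mp hj).2
    simp only [Finset.mem_filter, Finset.mem_univ, true_and] at hi ⊢
    exact ⟨hi.1, lt_trans hi.2 hjK⟩
  have h2 : ∑ j ∈ (topKNeg N K pos).filter (fun j : Fin N => ¬ (j : ℕ) < K),
      (Finset.univ.filter fun i => pos i = true ∧ i < j).card ≤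
      ((topKNeg N K pos).filter fun j : Fin N => ¬ (j : ℕ) < K).card * Np := by
    refine Finset.sum_le_card_nsmul _ _ _ fun j _ => ?_
    rw [← hpos]
    refine Finset.card_le_card fun i hi => ?_
    simp only [Finset.mem_filter, Finset.mem_univ, true_and] at hi ⊢
    exact hi.1
  have h3 : ((topKNeg N K pos).filter fun j : Fin N => ¬ (j : ℕ) < K).card ≤ topKPos N K pos := by
    omega
  have h4 := Nat.mul_le_mul_right Np h3
  have h5 := congrArg (· * topKPos N K pos) htop
  simp only [add_mul] at h5
  rw [mul_add, mul_comm _ K]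
  omega

/-- For any ranked list with `N₊ > K` positives and `N₋ > K` negatives, the
discriminant `(N₊+K)² − 4·N₊·N₋·OPAUC(K/N₋)` is nonnegative, and
`Recall@K ≥ (1/N₊)·⌊(N₊+K − √((N₊+K)² − 4·N₊·N₋·OPAUC(K/N₋)))/2⌋`,
where `OPAUC(K/N₋) = C/(N₊·N₋)` and `Recall@K = t/N₊`. -/
theorem stmt0 (Np Nm K : ℕ) (hKp : K < Np) (hKm : K < Nm)
    (pos : Fin (Np + Nm) → Bool)
    (hpos : (Finset.univ.filter fun i => pos i = true).card = Np) :
    0 ≤ ((Np : ℝ) + K) ^ 2 -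
        4 * Np * Nm * ((pairCount (Np + Nm) K pos : ℝ) / (Np * Nm)) ∧
    (1 / (Np : ℝ)) *
        (⌊((Np : ℝ) + K - Real.sqrt (((Np : ℝ) + K) ^ 2 -
            4 * Np * Nm * ((pairCount (Np + Nm) K pos : ℝ) / (Np * Nm)))) / 2⌋ : ℝ)
      ≤ (topKPos (Np + Nm) K pos : ℝ) / Np := by
  have hNp : (0 : ℝ) < Np := by exact_mod_cast Nat.zero_lt_of_lt hKp
  have hNm : (0 : ℝ) < Nm := by exact_mod_cast Nat.zero_lt_of_lt hKm
  have hC := pairCount_le (Np + Nm) K Np (by omega) pos hpos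
  have hC' : (pairCount (Np + Nm) K pos : ℝ) +
      topKPos (Np + Nm) K pos * topKPos (Np + Nm) K pos ≤
      topKPos (Np + Nm) K pos * (Np + K) := by exact_mod_cast hC
  generalize (pairCount (Np + Nm) K pos : ℝ) = C at hC' ⊢
  generalize (topKPos (Np + Nm) K pos : ℝ) = t at hC' ⊢
  have hD : 4 * (Np : ℝ) * Nm * (C / (Np * Nm)) = 4 * C := by field_simp
  rw [hD]
  have hsq : ((Np : ℝ) + K - 2 * t) ^ 2 ≤ ((Np : ℝ) + K) ^ 2 - 4 * C := by nlinarith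
  refine ⟨(sq_nonneg _).trans hsq, ?_⟩
  rw [one_div_mul_eq_div]
  refine div_le_div_of_nonneg_right ((Int.floor_le _).trans ?_) hNp.le
  have := Real.le_sqrt_of_sq_le hsq
  linarith
end

section
/- For any ranked list of N₊ positive and N₋ negative items with N₊ > K and N₋ > K, Recall@K ≤ (1/N₊)·⌈√(N₊·N₋·OPAUC(β))⌉, where β = K/N₋, ⌈·⌉ is the integer ceiling, and √ is the real square root. -/
/-- A list with more than `K` negatives has at least `K` top-`K` negatives: otherwise the
best-ranked negative outside `topKNeg` would be preceded by fewer than `K` negatives. -/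
theorem le_card_topKNeg (N K : ℕ) (pos : Fin N → Bool)
    (h : K < (Finset.univ.filter fun j => pos j = false).card) :
    K ≤ (topKNeg N K pos).card := by
  by_contra! hlt
  obtain ⟨j₀, hj₀, hj₀'⟩ := Finset.exists_mem_notMem_of_card_lt_card (hlt.trans h)
  have hne : ((Finset.univ.filter fun j => pos j = false) \ topKNeg N K pos).Nonempty :=
    ⟨j₀, Finset.mem_sdiff.2 ⟨hj₀, hj₀'⟩⟩
  obtain ⟨j, hj, hmin⟩ := Finset.exists_min_image _ id hne
  rw [Finset.mem_sdiff, Finset.mem_filter] at hj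
  refine hj.2 (Finset.mem_filter.2 ⟨Finset.mem_univ _, hj.1.2, ?_⟩)
  refine lt_of_le_of_lt (Finset.card_le_card fun j' hj' => ?_) hlt
  rw [Finset.mem_filter] at hj'
  by_contra hn
  exact absurd (hmin j' (Finset.mem_sdiff.2
    ⟨Finset.mem_filter.2 ⟨Finset.mem_univ _, hj'.2.1⟩, hn⟩)) (not_le.2 hj'.2.2)

theorem sq_topKPos_le_pairCount (N K : ℕ) (pos : Fin N → Bool)
    (h : K < (Finset.univ.filter fun j => pos j = false).card) :
    topKPos N K pos ^ 2 ≤ pairCount N K pos := by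
  set S : Finset (Fin N) := Finset.univ.filter fun i => pos i = true ∧ (i : ℕ) < K with hS
  set A := (topKNeg N K pos).filter fun j : Fin N => (j : ℕ) < K with hA
  set B := (topKNeg N K pos).filter fun j : Fin N => ¬ (j : ℕ) < K with hB
  have hAB : A.card + B.card = (topKNeg N K pos).card :=
    Finset.card_filter_add_card_filter_not _
  have hdisj : Disjoint S A := by
    rw [Finset.disjoint_left]
    intro i hi hi'
    simp [hS, hA, topKNeg] at hi hi'
    simp [hi.1] at hi'
  have hSA : S.card + A.card ≤ K := by
    rw [← Finset.card_union_of_disjoint hdisj, ← Finset.card_range K]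
    refine Finset.card_le_card_of_injOn (fun i : Fin N => (i : ℕ)) ?_ (Fin.val_injective.injOn)
    intro i hi
    simp only [Finset.coe_union, Set.mem_union, Finset.mem_coe, hS, hA, Finset.mem_filter] at hi
    simp only [Finset.coe_range, Set.mem_Iio]
    tauto
  have hK := le_card_topKNeg N K pos h
  have hSB : S.card ≤ B.card := by omega
  have hsub : S ×ˢ B ⊆ Finset.univ.filter fun p : Fin N × Fin N =>
      pos p.1 = true ∧ p.2 ∈ topKNeg N K pos ∧ p.1 < p.2 := by
    rintro ⟨i, j⟩ hp
    simp only [Finset.mem_product, hS, hB, Finset.mem_filter, Finset.mem_univ, true_and] at hp ⊢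
    exact ⟨hp.1.1, hp.2.1, Fin.lt_def.2 (by omega)⟩
  calc topKPos N K pos ^ 2 = S.card * S.card := sq _
    _ ≤ S.card * B.card := Nat.mul_le_mul_left _ hSB
    _ = (S ×ˢ B).card := (Finset.card_product _ _).symm
    _ ≤ pairCount N K pos := Finset.card_le_card hsub

/-- For any ranked list with `N₊ > K` positives and `N₋ > K` negatives,
`Recall@K ≤ (1/N₊)·⌈√(N₊·N₋·OPAUC(K/N₋))⌉`,
where `OPAUC(K/N₋) = C/(N₊·N₋)` and `Recall@K = t/N₊`. -/
theorem stmt1 (Np Nm K : ℕ) (hKp : K < Np) (hKm : K < Nm)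
    (pos : Fin (Np + Nm) → Bool)
    (hpos : (Finset.univ.filter fun i => pos i = true).card = Np) :
    (topKPos (Np + Nm) K pos : ℝ) / Np ≤
      (1 / (Np : ℝ)) *
        (⌈Real.sqrt ((Np : ℝ) * Nm *
            ((pairCount (Np + Nm) K pos : ℝ) / (Np * Nm)))⌉ : ℝ) := by
  have hneg : (Finset.univ.filter fun i => pos i = false).card = Nm := by
    have := Finset.card_filter_add_card_filter_not (s := Finset.univ) (fun i => pos i = true)
    simp only [Bool.not_eq_true, Finset.card_univ, Fintype.card_fin] at this
    omega
  have hsq := sq_topKPos_le_pairCount (Np + Nm) K pos (hneg.symm ▸ hKm)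
  have hp : (Np : ℝ) ≠ 0 := by exact_mod_cast (by omega : Np ≠ 0)
  have hm : (Nm : ℝ) ≠ 0 := by exact_mod_cast (by omega : Nm ≠ 0)
  rw [mul_div_cancel₀ _ (mul_ne_zero hp hm), div_eq_mul_one_div, mul_comm]
  refine mul_le_mul_of_nonneg_left ?_ (by positivity)
  exact (Real.le_sqrt_of_sq_le (by exact_mod_cast hsq)).trans (Int.le_ceil _)
end

section
/- For any ranked list of N₊ positive and N₋ negative items with N₊ > K and N₋ > K, if exactly t positive items occupy ranks among the top K (so 0 ≤ t ≤ K and t ≤ N₊), then the pair count C = N₊·N₋·OPAUC(K/N₋) satisfies C ≤ (N₊ + K)·t − t². -/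
theorem card_fin_lt {N K : ℕ} (h : K ≤ N) :
    (Finset.univ.filter fun i : Fin N => (i : ℕ) < K).card = K := by
  rw [Fin.card_filter_val_lt, min_eq_right h]

/-- A negative within the first `K` ranks has fewer than `K` items before it. -/
theorem mem_topKNeg_of_lt {N K : ℕ} {pos : Fin N → Bool} {j : Fin N}
    (hj : pos j = false) (hK : (j : ℕ) < K) : j ∈ topKNeg N K pos := by
  simp only [topKNeg, Finset.mem_filter, Finset.mem_univ, true_and]
  refine ⟨hj, lt_of_le_of_lt ?_ hK⟩
  calc _ ≤ (Finset.univ.filter fun i : Fin N => (i : ℕ) < j).card :=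
        Finset.card_le_card fun x hx => by
          simp only [Finset.mem_filter, Finset.mem_univ, true_and] at hx ⊢
          exact hx.2
    _ = j := card_fin_lt j.isLt.le

/-- For any ranked list with `N₊ > K` positives and `N₋ > K` negatives, if
exactly `t` positive items occupy top-`K` ranks, then the pair count `C`
(i.e. `N₊·N₋·OPAUC(K/N₋)`) satisfies `C ≤ (N₊+K)·t − t²`. -/
theorem stmt4 (Np Nm K t : ℕ) (hKp : K < Np) (hKm : K < Nm)
    (pos : Fin (Np + Nm) → Bool)
    (hpos : (Finset.univ.filter fun i => pos i = true).card = Np)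
    (ht : topKPos (Np + Nm) K pos = t) :
    (pairCount (Np + Nm) K pos : ℤ) ≤ ((Np : ℤ) + K) * t - (t : ℤ) ^ 2 := by
  set P := Finset.univ.filter fun i : Fin (Np + Nm) => pos i = true
  set P₀ := Finset.univ.filter fun i : Fin (Np + Nm) => pos i = true ∧ (i : ℕ) < K with hP₀
  set T := topKNeg (Np + Nm) K pos with hT
  set A := T.filter fun j : Fin (Np + Nm) => (j : ℕ) < K with hA
  set B := T.filter fun j : Fin (Np + Nm) => ¬ (j : ℕ) < K with hB
  have ht' : P₀.card = t := ht
  have hneg : ∀ j ∈ T, pos j = false := fun j hj => by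
    simp only [hT, topKNeg, Finset.mem_filter] at hj
    exact hj.2.1
  have hAB : A.card + B.card = T.card := Finset.card_filter_add_card_filter_not _
  have hTK : T.card ≤ K := card_topKNeg_le _ _ _
  have hPA : P₀.card + A.card = K := by
    rw [← Finset.card_union_of_disjoint]
    · rw [← card_fin_lt (show K ≤ Np + Nm by omega)]
      congr 1
      ext i
      simp only [hP₀, hA, Finset.mem_union, Finset.mem_filter, Finset.mem_univ, true_and]
      constructor
      · rintro (h | h)
        · exact h.2
        · exact h.2
      · intro h
        cases hi : pos i
        · exact Or.inr ⟨mem_topKNeg_of_lt hi h, h⟩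
        · exact Or.inl ⟨rfl, h⟩
    · rw [Finset.disjoint_left]
      intro i hi hi'
      have h1 := (Finset.mem_filter.1 hi).2.1
      have h2 := hneg i (Finset.mem_filter.1 hi').1
      simp [h1] at h2
  have hC : pairCount (Np + Nm) K pos ≤ P₀.card * A.card + P.card * B.card := by
    rw [← Finset.card_product, ← Finset.card_product]
    refine le_trans (Finset.card_le_card ?_) (Finset.card_union_le _ _)
    rintro ⟨i, j⟩ hij
    simp only [Finset.mem_filter, Finset.mem_univ, true_and] at hij
    obtain ⟨hi, hj, hlt⟩ := hij
    have hlt' : (i : ℕ) < j := hlt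
    rw [Finset.mem_union, Finset.mem_product, Finset.mem_product]
    by_cases h : (j : ℕ) < K
    · exact Or.inl ⟨by simp [hP₀, hi, hlt'.trans h], Finset.mem_filter.2 ⟨hj, h⟩⟩
    · exact Or.inr ⟨by simp [P, hi], Finset.mem_filter.2 ⟨hj, h⟩⟩
  have hBt : B.card ≤ t := by omega
  have hC' : pairCount (Np + Nm) K pos ≤ t * A.card + Np * t := by
    rw [ht', hpos] at hC
    exact hC.trans (by gcongr)
  have hAz : (A.card : ℤ) = K - t := by omega
  have hCz : (pairCount (Np + Nm) K pos : ℤ) ≤ t * A.card + Np * t := by exact_mod_cast hC'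
  rw [hAz] at hCz
  linarith
end

section
/- For any ranked list of N₊ positive and N₋ negative items with N₊ > K and N₋ > K, if exactly t positive items occupy ranks among the top K (so 0 ≤ t ≤ K and t ≤ N₊), then the pair count C = N₊·N₋·OPAUC(K/N₋) satisfies C ≥ t². -/
/-- A finite set with at least `K` elements has at least `K` elements of rank below `K`, the rank
being the number of smaller elements of the set: its `K` smallest elements are such. -/
theorem le_card_filter_rank_lt {α : Type*} [LinearOrder α] (S : Finset α) (K : ℕ)
    (h : K ≤ S.card) :
    K ≤ (S.filter fun j => (S.filter fun j' => j' < j).card < K).card := by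
  let e := S.orderEmbOfFin rfl
  have key : Finset.univ.image (fun i : Fin K => e (Fin.castLE h i)) ⊆
      S.filter fun j => (S.filter fun j' => j' < j).card < K := by
    intro x hx
    obtain ⟨i, -, rfl⟩ := Finset.mem_image.1 hx
    refine Finset.mem_filter.2 ⟨S.orderEmbOfFin_mem rfl _, ?_⟩
    have hsub : (S.filter fun j' => j' < e (Fin.castLE h i)) ⊆
        (Finset.Iio (Fin.castLE h i)).image e := by
      intro y hy
      obtain ⟨hyS, hlt⟩ := Finset.mem_filter.1 hy
      have hr : y ∈ Set.range e := by
        simpa [e, Finset.range_orderEmbOfFin] using hyS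
      obtain ⟨k, rfl⟩ := hr
      exact Finset.mem_image_of_mem _ (Finset.mem_Iio.2 (e.lt_iff_lt.1 hlt))
    calc _ ≤ _ := Finset.card_le_card hsub
      _ ≤ (Finset.Iio (Fin.castLE h i)).card := Finset.card_image_le
      _ = i := by simp
      _ < K := i.2
  have hcard := Finset.card_le_card key
  rwa [Finset.card_image_of_injective _
    (fun _ _ hab => Fin.castLE_injective h (e.injective hab)), Finset.card_univ, Fintype.card_fin] at hcard

/-- For any ranked list with `N₊ > K` positives and `N₋ > K` negatives, if
exactly `t` positive items occupy top-`K` ranks, then the pair count `C`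
(i.e. `N₊·N₋·OPAUC(K/N₋)`) satisfies `C ≥ t²`. -/
theorem stmt5 (Np Nm K t : ℕ) (hKp : K < Np) (hKm : K < Nm)
    (pos : Fin (Np + Nm) → Bool)
    (hpos : (Finset.univ.filter fun i => pos i = true).card = Np)
    (ht : topKPos (Np + Nm) K pos = t) :
    t ^ 2 ≤ pairCount (Np + Nm) K pos := by
  have hneg : (Finset.univ.filter fun i => pos i = false).card = Nm := by
    have h := Finset.card_filter_add_card_filter_not (s := Finset.univ)
      (fun i => pos i = true)
    simp only [Bool.not_eq_true, Finset.card_univ, Fintype.card_fin] at h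
    omega
  have hT : K ≤ (topKNeg (Np + Nm) K pos).card := by
    have h := le_card_filter_rank_lt (Finset.univ.filter fun i => pos i = false) K (by omega)
    simpa only [topKNeg, Finset.filter_filter] using h
  set A := Finset.univ.filter fun i : Fin (Np + Nm) => pos i = true ∧ (i : ℕ) < K with hA
  set T := topKNeg (Np + Nm) K pos with hTdef
  have hAt : A.card = t := ht
  have hsplit := Finset.card_filter_add_card_filter_not (s := T)
    (fun j : Fin (Np + Nm) => (j : ℕ) < K)
  have htop : A.card + (T.filter fun j : Fin (Np + Nm) => (j : ℕ) < K).card ≤ K := by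
    rw [← Finset.card_union_of_disjoint]
    · calc _ ≤ (Finset.range K).card := by
            refine Finset.card_le_card_of_injOn (fun i : Fin (Np + Nm) => (i : ℕ)) ?_
              Fin.val_injective.injOn
            intro i hi
            simp only [hA, Finset.coe_union, Set.mem_union, Finset.mem_coe,
              Finset.mem_filter] at hi
            simp only [Finset.coe_range, Set.mem_Iio]
            tauto
        _ = K := Finset.card_range K
    · rw [Finset.disjoint_left]
      intro i hi hj
      simp only [hA, hTdef, topKNeg, Finset.mem_filter, Finset.mem_univ, true_and] at hi hj
      simp_all
  set B := T.filter fun j : Fin (Np + Nm) => ¬ (j : ℕ) < K with hB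
  have hBt : t ≤ B.card := by omega
  have hAB : (A ×ˢ B).card ≤ pairCount (Np + Nm) K pos := by
    refine Finset.card_le_card ?_
    rintro ⟨i, j⟩ hij
    simp only [hA, hB, Finset.mem_product, Finset.mem_filter, Finset.mem_univ, true_and] at hij
    simp only [Finset.mem_filter, Finset.mem_univ, true_and]
    exact ⟨hij.1.1, hij.2.1, Fin.lt_def.2 (by omega)⟩
  rw [Finset.card_product, hAt] at hAB
  calc t ^ 2 = t * t := sq t
    _ ≤ t * B.card := Nat.mul_le_mul_left t hBt
    _ ≤ _ := hAB
end

section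
/- Let N₊ > K, N₋ > K, and 0 ≤ t ≤ K with t ≤ N₊. There exists a ranked list of N₊ positive and N₋ negative items with exactly t positive items among the top K ranks whose pair count attains the minimum value C = t² (namely: K − t negatives first, then the t positives, then t more negatives, then all remaining items in any order with the remaining positives preceding the remaining negatives never beating a top-K negative—concretely, remaining negatives then remaining positives). -/
/-- Counting in `Fin N` by exhibiting the set of underlying natural numbers. -/
lemma card_filter_fin_eq {N : ℕ} (p : Fin N → Prop) [DecidablePred p] (s : Finset ℕ)
    (hlt : ∀ n ∈ s, n < N) (hs : ∀ i : Fin N, p i ↔ (i : ℕ) ∈ s) :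
    (Finset.univ.filter p).card = s.card := by
  rw [← Finset.card_map Fin.valEmbedding]
  congr 1
  ext n
  simp only [Finset.mem_map, Finset.mem_filter, Finset.mem_univ, true_and, Fin.valEmbedding_apply]
  constructor
  · rintro ⟨i, hi, rfl⟩
    exact (hs i).1 hi
  · intro hn
    exact ⟨⟨n, hlt n hn⟩, (hs _).2 hn, rfl⟩

/-- The extremal list: `K - t` negatives, `t` positives, `Nm + t - K` negatives, and then the
remaining `Np - t` positives. -/
def extremalList (Np Nm K t : ℕ) (i : Fin (Np + Nm)) : Bool :=
  decide ((K - t ≤ (i : ℕ) ∧ (i : ℕ) < K) ∨ Nm + t ≤ (i : ℕ))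

lemma extremalList_eq_true {Np Nm K t : ℕ} (i : Fin (Np + Nm)) :
    extremalList Np Nm K t i = true ↔ (K - t ≤ (i : ℕ) ∧ (i : ℕ) < K) ∨ Nm + t ≤ (i : ℕ) := by
  simp [extremalList]

lemma extremalList_eq_false {Np Nm K t : ℕ} (i : Fin (Np + Nm)) :
    extremalList Np Nm K t i = false ↔
      ¬ ((K - t ≤ (i : ℕ) ∧ (i : ℕ) < K) ∨ Nm + t ≤ (i : ℕ)) := by
  simp only [extremalList, decide_eq_false_iff_not]

lemma mem_topKNeg_extremalList {Np Nm K t : ℕ} (hKm : K < Nm) (htK : t ≤ K)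
    (j : Fin (Np + Nm)) :
    j ∈ topKNeg (Np + Nm) K (extremalList Np Nm K t) ↔
      (j : ℕ) < K - t ∨ (K ≤ (j : ℕ) ∧ (j : ℕ) < K + t) := by
  have hj := j.isLt
  simp only [topKNeg, Finset.mem_filter, Finset.mem_univ, true_and]
  rw [extremalList_eq_false]
  by_cases h1 : (j : ℕ) < K - t
  · rw [card_filter_fin_eq _ (Finset.range j)
      (by intro n hn; rw [Finset.mem_range] at hn; omega)
      (by
        intro i
        rw [extremalList_eq_false, Fin.lt_def, Finset.mem_range]
        omega), Finset.card_range]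
    omega
  · by_cases h2 : K ≤ (j : ℕ) ∧ (j : ℕ) < Nm + t
    · rw [card_filter_fin_eq _ (Finset.range (K - t) ∪ Finset.Ico K j)
        (by intro n hn; rw [Finset.mem_union, Finset.mem_range, Finset.mem_Ico] at hn; omega)
        (by
          intro i
          rw [extremalList_eq_false, Fin.lt_def, Finset.mem_union, Finset.mem_range,
            Finset.mem_Ico]
          omega),
        Finset.card_union_of_disjoint, Finset.card_range, Nat.card_Ico]
      · omega
      · rw [Finset.disjoint_left]
        intro n hn
        rw [Finset.mem_range] at hn
        rw [Finset.mem_Ico]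
        omega
    · constructor
      · rintro ⟨h, -⟩
        omega
      · omega

/-- For `N₊ > K`, `N₋ > K` and `t ≤ K` with `t ≤ N₊`, there exists a ranked
list of `N₊` positives and `N₋` negatives with exactly `t` positives among the
top `K` ranks whose pair count attains the minimum value `t²`. -/
theorem stmt7 (Np Nm K t : ℕ) (hKp : K < Np) (hKm : K < Nm)
    (htK : t ≤ K) (htNp : t ≤ Np) :
    ∃ pos : Fin (Np + Nm) → Bool,
      (Finset.univ.filter fun i => pos i = true).card = Np ∧
      topKPos (Np + Nm) K pos = t ∧
      pairCount (Np + Nm) K pos = t ^ 2 := by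
  refine ⟨extremalList Np Nm K t, ?_, ?_, ?_⟩
  · rw [card_filter_fin_eq _ (Finset.Ico (K - t) K ∪ Finset.Ico (Nm + t) (Np + Nm))
      (by intro n hn; rw [Finset.mem_union, Finset.mem_Ico, Finset.mem_Ico] at hn; omega)
      (by
        intro i
        have hi := i.isLt
        rw [extremalList_eq_true, Finset.mem_union, Finset.mem_Ico, Finset.mem_Ico]
        omega),
      Finset.card_union_of_disjoint, Nat.card_Ico, Nat.card_Ico]
    · omega
    · rw [Finset.disjoint_left]
      intro n hn
      rw [Finset.mem_Ico] at hn ⊢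
      omega
  · rw [topKPos, card_filter_fin_eq _ (Finset.Ico (K - t) K)
      (by intro n hn; rw [Finset.mem_Ico] at hn; omega)
      (by
        intro i
        rw [extremalList_eq_true, Finset.mem_Ico]
        omega), Nat.card_Ico]
    omega
  · have hprod : (Finset.univ.filter fun p : Fin (Np + Nm) × Fin (Np + Nm) =>
        extremalList Np Nm K t p.1 = true ∧
          p.2 ∈ topKNeg (Np + Nm) K (extremalList Np Nm K t) ∧ p.1 < p.2) =
        (Finset.univ.filter fun i : Fin (Np + Nm) => (i : ℕ) ∈ Finset.Ico (K - t) K) ×ˢ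
          (Finset.univ.filter fun j : Fin (Np + Nm) => (j : ℕ) ∈ Finset.Ico K (K + t)) := by
      ext ⟨i, j⟩
      simp only [Finset.mem_filter, Finset.mem_univ, true_and, Finset.mem_product,
        Finset.mem_Ico, extremalList_eq_true, mem_topKNeg_extremalList hKm htK, Fin.lt_def]
      omega
    rw [pairCount, hprod, Finset.card_product,
      card_filter_fin_eq _ (Finset.Ico (K - t) K)
        (by intro n hn; rw [Finset.mem_Ico] at hn; omega) (fun _ => Iff.rfl),
      card_filter_fin_eq _ (Finset.Ico K (K + t))
        (by intro n hn; rw [Finset.mem_Ico] at hn; omega) (fun _ => Iff.rfl),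
      Nat.card_Ico, Nat.card_Ico, Nat.sub_sub_self htK, Nat.add_sub_cancel_left, sq]
end

section
/- Let n ≥ 1, let L : Fin n → ℝ, and let M be an integer with 1 ≤ M ≤ n. Then the infimum over η ∈ ℝ of the function η ↦ (1/M)·Σ_{j} max(L_j − η, 0) + η equals (1/M)·max{ Σ_{j∈S} L_j : S ⊆ Fin n, |S| = M }, and the infimum is attained. -/
/-!
Weak duality: for every `η` and every `S` with `|S| = M`, replacing `L j - η` by its positive part
and enlarging `S` to the whole index set gives `∑ j ∈ S, L j ≤ ∑ j, max (L j - η) 0 + M * η`.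

Attainment: let `S` maximise `∑ j ∈ S, L j` among the `M`-element sets, and let `η` be the smallest
value of `L` on `S`. An exchange argument shows `L j ≤ η` off `S`, so the positive parts vanish
off `S`, equal `L j - η` on `S`, and the inequality above becomes an equality.
-/

theorem sum_le_sum_posPart_add {n : ℕ} (L : Fin n → ℝ) (S : Finset (Fin n)) (η : ℝ) :
    ∑ j ∈ S, L j ≤ ∑ j, max (L j - η) 0 + S.card * η := by
  have h1 : ∑ j ∈ S, (L j - η) ≤ ∑ j ∈ S, max (L j - η) 0 :=
    Finset.sum_le_sum fun j _ => le_max_left _ _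
  have h2 : ∑ j ∈ S, max (L j - η) 0 ≤ ∑ j, max (L j - η) 0 :=
    Finset.sum_le_sum_of_subset_of_nonneg (Finset.subset_univ S) fun j _ _ => le_max_right _ _
  rw [Finset.sum_sub_distrib, Finset.sum_const, nsmul_eq_mul] at h1
  linarith

/-- A threshold separating `S` from its complement gives equality in `sum_le_sum_posPart_add`. -/
theorem sum_eq_sum_posPart_add {n : ℕ} (L : Fin n → ℝ) (S : Finset (Fin n)) (η : ℝ)
    (hS : ∀ j ∈ S, η ≤ L j) (hS' : ∀ j ∉ S, L j ≤ η) :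
    ∑ j ∈ S, L j = ∑ j, max (L j - η) 0 + S.card * η := by
  have h1 : ∑ j ∈ S, max (L j - η) 0 = ∑ j ∈ S, (L j - η) :=
    Finset.sum_congr rfl fun j hj => max_eq_left (sub_nonneg.2 (hS j hj))
  have h2 : ∑ j ∈ S, max (L j - η) 0 = ∑ j, max (L j - η) 0 :=
    Finset.sum_subset (Finset.subset_univ S) fun j _ hj =>
      max_eq_right (sub_nonpos.2 (hS' j hj))
  rw [← h2, h1, Finset.sum_sub_distrib, Finset.sum_const, nsmul_eq_mul]
  ring

/-- Exchange argument: if `S` has maximal sum among the sets of its cardinality, then no value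
of `L` off `S` exceeds a value on `S`; otherwise swapping the two indices would raise the sum. -/
theorem le_of_sum_maximal {n : ℕ} (L : Fin n → ℝ) (S : Finset (Fin n))
    (hmax : ∀ T : Finset (Fin n), T.card = S.card → ∑ j ∈ T, L j ≤ ∑ j ∈ S, L j)
    {i j : Fin n} (hi : i ∈ S) (hj : j ∉ S) : L j ≤ L i := by
  have hj' : j ∉ S.erase i := fun h => hj (Finset.mem_of_mem_erase h)
  have h := hmax (insert j (S.erase i)) (by
    rw [Finset.card_insert_of_notMem hj', Finset.card_erase_add_one hi])
  rw [Finset.sum_insert hj', ← Finset.add_sum_erase S L hi] at h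
  linarith


/-- Finite-sample CVaR dual (Rockafellar–Uryasev) representation: the infimum
over `η ∈ ℝ` of `(1/M) · ∑ j, max (L j − η) 0 + η` equals
`(1/M) · max { ∑ j in S, L j : |S| = M }`, and the infimum is attained. -/
theorem stmt9 (n M : ℕ) (hn : 1 ≤ n) (hM1 : 1 ≤ M) (hMn : M ≤ n) (L : Fin n → ℝ) :
    IsLeast
      {x : ℝ | ∃ η : ℝ, x = (1 / (M : ℝ)) * ∑ j, max (L j - η) 0 + η}
      ((1 / (M : ℝ)) *
        ((Finset.univ.powersetCard M).sup'
          (Finset.powersetCard_nonempty.mpr (by simpa using hMn))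
          fun S => ∑ j ∈ S, L j)) := by
  have hM : (0 : ℝ) < M := by exact_mod_cast hM1
  constructor
  · obtain ⟨S, hS, hsup⟩ := Finset.exists_mem_eq_sup' (s := Finset.univ.powersetCard M)
      (Finset.powersetCard_nonempty.mpr (by simpa using hMn)) (fun S => ∑ j ∈ S, L j)
    have hcard : S.card = M := (Finset.mem_powersetCard.1 hS).2
    have hmax : ∀ T : Finset (Fin n), T.card = S.card → ∑ j ∈ T, L j ≤ ∑ j ∈ S, L j := by
      intro T hT
      rw [← hsup]
      exact Finset.le_sup' (fun S => ∑ j ∈ S, L j)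
        (Finset.mem_powersetCard.2 ⟨Finset.subset_univ T, hT.trans hcard⟩)
    obtain ⟨i, hi, hmin⟩ := S.exists_min_image L (Finset.card_pos.1 (by omega))
    refine ⟨L i, ?_⟩
    rw [hsup, sum_eq_sum_posPart_add L S (L i) hmin
      (fun j hj => le_of_sum_maximal L S hmax hi hj), hcard]
    field_simp
  · rintro x ⟨η, rfl⟩
    have h : (Finset.univ.powersetCard M).sup'
        (Finset.powersetCard_nonempty.mpr (by simpa using hMn)) (fun S => ∑ j ∈ S, L j)
        ≤ ∑ j, max (L j - η) 0 + M * η := by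
      refine Finset.sup'_le _ _ fun S hS => ?_
      have h := sum_le_sum_posPart_add L S η
      rwa [(Finset.mem_powersetCard.1 hS).2] at h
    calc _ ≤ (1 / (M : ℝ)) * (∑ j, max (L j - η) 0 + M * η) :=
          mul_le_mul_of_nonneg_left h (by positivity)
      _ = _ := by field_simp
end

section
/- Let n ≥ 1, let L : Fin n → ℝ, and let M be an integer with 1 ≤ M ≤ n. Let η* be the M-th largest value among L_1,…,L_n (counted with multiplicity). Then (1/M)·Σ_j max(L_j − η*, 0) + η* = (1/M)·max{ Σ_{j∈S} L_j : S ⊆ Fin n, |S| = M }; that is, the (M/n)-quantile η* attains the minimum of the CVaR dual objective. -/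
/-! With `η` the `M`-th largest entry, every `S` of size `M` satisfies
`∑ j ∈ S, L j = ∑ j ∈ S, (L j - η) + M η ≤ ∑ j, max (L j - η) 0 + M η`.
Equality holds when `S` consists of the indices of `M` largest entries: `L j - η` is nonnegative
on `S` and nonpositive off `S`. -/

/-- The `M`-th largest entry of `L` (i.e. `L (σ ⟨M-1, _⟩)` for any permutation
`σ` sorting `L` in non-increasing order) attains the minimum of the CVaR dual
objective `η ↦ (1/M) · ∑ j, max (L j − η) 0 + η`, whose minimal value is
`(1/M) · max { ∑ j in S, L j : |S| = M }`. -/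
theorem stmt10 (n M : ℕ) (hn : 1 ≤ n) (hM1 : 1 ≤ M) (hMn : M ≤ n) (L : Fin n → ℝ)
    (σ : Equiv.Perm (Fin n)) (hσ : Antitone (L ∘ σ)) :
    (1 / (M : ℝ)) * ∑ j, max (L j - L (σ ⟨M - 1, by omega⟩)) 0 +
        L (σ ⟨M - 1, by omega⟩) =
      (1 / (M : ℝ)) *
        ((Finset.univ.powersetCard M).sup'
          (Finset.powersetCard_nonempty.mpr (by simpa using hMn))
          fun S => ∑ j ∈ S, L j) := by
  have hM0 : (M : ℝ) ≠ 0 := by positivity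
  set η := L (σ ⟨M - 1, by omega⟩) with hη
  -- Multiplied by `M`, the claim no longer involves division.
  suffices h : ∑ j, max (L j - η) 0 + M * η = (Finset.univ.powersetCard M).sup'
      (Finset.powersetCard_nonempty.mpr (by simpa using hMn)) fun S => ∑ j ∈ S, L j by
    rw [← h]
    field_simp
  have hsplit : ∀ S : Finset (Fin n), S.card = M →
      ∑ j ∈ S, L j = ∑ j ∈ S, (L j - η) + M * η := by
    intro S hS
    simp [Finset.sum_sub_distrib, hS]
  apply le_antisymm
  · have hcard : ((Finset.univ.filter fun i : Fin n => i.val < M).map σ.toEmbedding).card = M := by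
      simp [Fin.card_filter_val_lt, hMn]
    refine le_trans (le_of_eq ?_) (Finset.le_sup' (fun S => ∑ j ∈ S, L j)
      (Finset.mem_powersetCard.mpr ⟨Finset.subset_univ _, hcard⟩))
    rw [hsplit _ hcard, Finset.sum_map, Finset.sum_filter, ← Equiv.sum_comp σ]
    congr 1
    refine Finset.sum_congr rfl fun i _ => ?_
    split_ifs with hi
    · have h1 : η ≤ L (σ i) := hσ (show i ≤ ⟨M - 1, by omega⟩ by
        rw [Fin.le_def]; dsimp only; omega)
      exact max_eq_left (sub_nonneg.mpr h1)
    · have h1 : L (σ i) ≤ η := hσ (show (⟨M - 1, by omega⟩ : Fin n) ≤ i by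
        rw [Fin.le_def]; dsimp only; omega)
      exact max_eq_right (sub_nonpos.mpr h1)
  · refine Finset.sup'_le _ _ fun S hS => ?_
    rw [hsplit S (Finset.mem_powersetCard.mp hS).2]
    gcongr
    calc ∑ j ∈ S, (L j - η) ≤ ∑ j ∈ S, max (L j - η) 0 :=
          Finset.sum_le_sum fun j _ => le_max_left _ _
      _ ≤ ∑ j, max (L j - η) 0 :=
          Finset.sum_le_sum_of_subset_of_nonneg (Finset.subset_univ S)
            fun j _ _ => le_max_right _ _
end

section
/- Let n ≥ 1, L : Fin n → ℝ, and λ > 0. Then the supremum over probability vectors q : Fin n → ℝ (q_j ≥ 0, Σ_j q_j = 1) of Σ_j q_j·L_j − λ·Σ_j q_j·log(n·q_j) (with the convention 0·log 0 = 0) equals λ·log((1/n)·Σ_j exp(L_j/λ)), and it is attained at the softmax distribution q_j = exp(L_j/λ)/Σ_k exp(L_k/λ). -/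
/-!
Write `Z = ∑ k, exp (L k / λ)`, `p j = exp (L j / λ) / Z` and `V = λ log (Z / n)`. Since
`log (p j) = L j / λ - log Z`, we have `L j - λ log (n * p j) = V` for every `j`, so averaging
against `p` gives the value `V` at the softmax. For another probability vector `q`, the objective
is `V - λ ∑ j, q j * log (q j / p j)`, and Gibbs' inequality bounds it by `V`: it suffices to sum
`q j * log (p j / q j) ≤ p j - q j`, a form of `log x ≤ x - 1`.
-/

/-- At the softmax weight, the penalized reward `l - λ log (n p)` does not depend on `l`. -/
lemma softmax_reward {n Z : ℝ} (hn : 0 < n) (hZ : 0 < Z) {lam : ℝ} (hlam : 0 < lam) (l : ℝ) :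
    l - lam * Real.log (n * (Real.exp (l / lam) / Z)) = lam * Real.log (1 / n * Z) := by
  rw [Real.log_mul hn.ne' (by positivity), Real.log_div (Real.exp_ne_zero _) hZ.ne', Real.log_exp,
    Real.log_mul (by positivity) hZ.ne', one_div, Real.log_inv]
  field_simp
  ring

/-- The termwise form of Gibbs' inequality; the corrections `p - q` cancel on summation. -/
lemma gibbs_term {n p q : ℝ} (hn : 0 < n) (hp : 0 < p) (hq : 0 ≤ q) :
    q * Real.log (n * p) - q * Real.log (n * q) ≤ p - q := by
  rcases hq.eq_or_lt with rfl | hq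
  · simpa using hp.le
  · have h := mul_le_mul_of_nonneg_left (Real.log_le_sub_one_of_pos (div_pos hp hq)) hq.le
    rw [Real.log_div hp.ne' hq.ne', mul_sub, mul_sub, mul_div_cancel₀ _ hq.ne'] at h
    rw [Real.log_mul hn.ne' hp.ne', Real.log_mul hn.ne' hq.ne']
    linarith

/-- Finite Gibbs/Donsker–Varadhan variational identity: the supremum over
probability vectors `q` of `∑ j, q j * L j − λ · ∑ j, q j * log (n * q j)`
equals `λ · log((1/n) · ∑ j, exp (L j / λ))`, it is attained, and in
particular it is attained at the softmax distribution
`q j = exp (L j / λ) / ∑ k, exp (L k / λ)`.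
(The convention `0 · log 0 = 0` holds automatically since `Real.log 0 = 0`.) -/
theorem stmt12 (n : ℕ) (hn : 1 ≤ n) (L : Fin n → ℝ) (lam : ℝ) (hlam : 0 < lam) :
    IsGreatest
      {x : ℝ | ∃ q : Fin n → ℝ, (∀ j, 0 ≤ q j) ∧ (∑ j, q j) = 1 ∧
        x = ∑ j, q j * L j - lam * ∑ j, q j * Real.log (n * q j)}
      (lam * Real.log ((1 / (n : ℝ)) * ∑ j, Real.exp (L j / lam))) ∧
    (∑ j, (Real.exp (L j / lam) / ∑ k, Real.exp (L k / lam)) * L j -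
        lam * ∑ j, (Real.exp (L j / lam) / ∑ k, Real.exp (L k / lam)) *
          Real.log (n * (Real.exp (L j / lam) / ∑ k, Real.exp (L k / lam)))) =
      lam * Real.log ((1 / (n : ℝ)) * ∑ j, Real.exp (L j / lam)) := by
  have hn0 : (0 : ℝ) < n := by exact_mod_cast hn
  have : Nonempty (Fin n) := ⟨⟨0, hn⟩⟩
  have hZ : 0 < ∑ k, Real.exp (L k / lam) :=
    Finset.sum_pos (fun k _ => Real.exp_pos _) Finset.univ_nonempty
  set Z := ∑ k, Real.exp (L k / lam)
  have hp : ∀ j, 0 < Real.exp (L j / lam) / Z := fun j => div_pos (Real.exp_pos _) hZ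
  have hp1 : ∑ j, Real.exp (L j / lam) / Z = 1 := by
    rw [← Finset.sum_div]
    exact div_self hZ.ne'
  have hsoft : ∑ j, (Real.exp (L j / lam) / Z) * L j -
      lam * ∑ j, (Real.exp (L j / lam) / Z) * Real.log (n * (Real.exp (L j / lam) / Z)) =
      lam * Real.log ((1 / (n : ℝ)) * Z) := by
    rw [Finset.mul_sum, ← Finset.sum_sub_distrib]
    calc _ = ∑ j, (Real.exp (L j / lam) / Z) * (lam * Real.log ((1 / (n : ℝ)) * Z)) := by
          refine Finset.sum_congr rfl fun j _ => ?_
          rw [← softmax_reward hn0 hZ hlam (L j)]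
          ring
      _ = _ := by rw [← Finset.sum_mul, hp1, one_mul]
  refine ⟨⟨⟨_, fun j => (hp j).le, hp1, hsoft.symm⟩, ?_⟩, hsoft⟩
  rintro x ⟨q, hq, hq1, rfl⟩
  rw [Finset.mul_sum, ← Finset.sum_sub_distrib]
  calc _ ≤ ∑ j, (q j * (lam * Real.log ((1 / (n : ℝ)) * Z)) +
          lam * (Real.exp (L j / lam) / Z - q j)) := by
        refine Finset.sum_le_sum fun j _ => ?_
        rw [← softmax_reward hn0 hZ hlam (L j)]
        linarith [mul_le_mul_of_nonneg_left (gibbs_term hn0 (hp j) (hq j)) hlam.le]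
    _ = _ := by
        rw [Finset.sum_add_distrib, ← Finset.sum_mul, ← Finset.mul_sum, Finset.sum_sub_distrib,
          hp1, hq1]
        ring
end

section
/- Let n ≥ 1, L : Fin n → ℝ, ρ > 0, and define g : (0, ∞) → ℝ by g(λ) = λ·log((1/n)·Σ_j exp(L_j/λ)) + λ·ρ. If λ₀ > 0 is a minimizer of g over (0, ∞), then λ₀ satisfies the fixed-point equation λ₀·(ρ + log((1/n)·Σ_j exp(L_j/λ₀))) = (Σ_j exp(L_j/λ₀)·L_j)/(Σ_j exp(L_j/λ₀)); consequently, the minimal value g(λ₀) equals the softmax-weighted average Σ_j [exp(L_j/λ₀)/Σ_k exp(L_k/λ₀)]·L_j. -/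
/-! The dual objective `g` is differentiable on the open half-line, with
`g'(λ) = log A + ρ - (1/λ) · (∑ j, exp (L j / λ) · L j) / (∑ j, exp (L j / λ))`, where
`A = (1/n) · ∑ j, exp (L j / λ)`. A minimizer over an open set is a local minimizer, so by Fermat's
theorem `g'(λ₀) = 0`; multiplying by `λ₀` gives the fixed-point equation. Its left-hand side is
`g(λ₀)` and its right-hand side is the softmax average, so the second claim is a rewriting of it. -/

/-- First-order optimality for the KL-DRO dual objective
`g(λ) = λ · log((1/n) · ∑ j, exp (L j / λ)) + λ·ρ` on `(0, ∞)`: any minimizer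
`λ₀ > 0` satisfies the fixed-point equation
`λ₀ · (ρ + log((1/n) · ∑ j, exp (L j / λ₀))) = (∑ j, exp (L j / λ₀) · L j) / (∑ j, exp (L j / λ₀))`,
and consequently `g(λ₀)` equals the softmax-weighted average
`∑ j, (exp (L j / λ₀) / ∑ k, exp (L k / λ₀)) · L j`. -/
theorem stmt13 (n : ℕ) (hn : 1 ≤ n) (L : Fin n → ℝ) (ρ : ℝ) (hρ : 0 < ρ)
    (lam0 : ℝ) (hlam0 : 0 < lam0)
    (hmin : ∀ lam : ℝ, 0 < lam →
      lam0 * Real.log ((1 / (n : ℝ)) * ∑ j, Real.exp (L j / lam0)) + lam0 * ρ ≤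
        lam * Real.log ((1 / (n : ℝ)) * ∑ j, Real.exp (L j / lam)) + lam * ρ) :
    lam0 * (ρ + Real.log ((1 / (n : ℝ)) * ∑ j, Real.exp (L j / lam0))) =
        (∑ j, Real.exp (L j / lam0) * L j) / (∑ j, Real.exp (L j / lam0)) ∧
    lam0 * Real.log ((1 / (n : ℝ)) * ∑ j, Real.exp (L j / lam0)) + lam0 * ρ =
        ∑ j, (Real.exp (L j / lam0) / ∑ k, Real.exp (L k / lam0)) * L j := by
  have hn0 : (n : ℝ) ≠ 0 := by positivity
  have hl : lam0 ≠ 0 := hlam0.ne'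
  have : Nonempty (Fin n) := ⟨⟨0, hn⟩⟩
  have hS : 0 < ∑ j, Real.exp (L j / lam0) :=
    Finset.sum_pos (fun j _ => Real.exp_pos _) Finset.univ_nonempty
  have hsum : HasDerivAt (fun x : ℝ => ∑ j, Real.exp (L j / x))
      (∑ j, Real.exp (L j / lam0) * (L j * -(lam0 ^ 2)⁻¹)) lam0 := by
    refine HasDerivAt.fun_sum fun j _ => ?_
    simpa only [div_eq_mul_inv] using ((hasDerivAt_inv hl).const_mul (L j)).exp
  have hA : (1 / (n : ℝ)) * ∑ j, Real.exp (L j / lam0) ≠ 0 :=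
    mul_ne_zero (one_div_ne_zero hn0) hS.ne'
  have hg := ((hasDerivAt_id' lam0).fun_mul ((hsum.const_mul (1 / (n : ℝ))).log hA)).fun_add
    ((hasDerivAt_id' lam0).mul_const ρ)
  have hloc : IsLocalMin (fun x : ℝ =>
      x * Real.log ((1 / (n : ℝ)) * ∑ j, Real.exp (L j / x)) + x * ρ) lam0 := by
    filter_upwards [Ioi_mem_nhds hlam0] with x hx using hmin x hx
  have h0 := hloc.hasDerivAt_eq_zero hg
  have hfac : ∑ j, Real.exp (L j / lam0) * (L j * -(lam0 ^ 2)⁻¹) =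
      (∑ j, Real.exp (L j / lam0) * L j) * -(lam0 ^ 2)⁻¹ := by
    simp only [Finset.sum_mul, mul_assoc]
  rw [hfac] at h0
  have key : lam0 * (ρ + Real.log ((1 / (n : ℝ)) * ∑ j, Real.exp (L j / lam0))) =
      (∑ j, Real.exp (L j / lam0) * L j) / (∑ j, Real.exp (L j / lam0)) := by
    -- The sums and the logarithm are made atoms so that clearing denominators leaves them intact.
    generalize Real.log ((1 / (n : ℝ)) * ∑ j, Real.exp (L j / lam0)) = l at h0 ⊢
    generalize ∑ j, Real.exp (L j / lam0) * L j = T at h0 ⊢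
    generalize ∑ j, Real.exp (L j / lam0) = S at h0 hS ⊢
    have hS' := hS.ne'
    field_simp at h0 ⊢
    linarith
  refine ⟨key, ?_⟩
  calc _ = lam0 * (ρ + Real.log ((1 / (n : ℝ)) * ∑ j, Real.exp (L j / lam0))) := by ring
    _ = _ := by
      rw [key, Finset.sum_div]
      exact Finset.sum_congr rfl fun j _ => by ring
end

section
/- Let n ≥ 1 and L : Fin n → ℝ, with mean μ = (1/n)·Σ_j L_j and variance σ² = (1/n)·Σ_j (L_j − μ)². Then λ·( λ·log((1/n)·Σ_j exp(L_j/λ)) − μ ) tends to σ²/2 as λ → +∞; equivalently, λ·log((1/n)·Σ_j exp(L_j/λ)) = μ + σ²/(2λ) + o(1/λ) as λ → +∞. -/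
/-!
With `t = 1 / lam`, the expression equals `K t / t ^ 2`, where
`K t = log ((1/n) · ∑ j, exp (t * L j)) - μ * t` is the centred cumulant generating function.
Here `K 0 = 0`, and `K' t` is the mean of `L` under the exponentially tilted weights minus `μ`,
so that `K' 0 = 0` and `K'' 0 = σ2`. One application of L'Hôpital's rule as `t → 0⁺` reduces
the limit to that of `K' t / (2 * t)`, which is half the difference quotient of `K'` at `0`.
-/

/-- The power sums `∑ j, L j ^ k * exp (t * L j)` are successive derivatives of each other. -/
lemma hasDerivAt_sum_pow_mul_exp {n : ℕ} (L : Fin n → ℝ) (k : ℕ) (t : ℝ) :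
    HasDerivAt (fun t : ℝ => ∑ j, L j ^ k * Real.exp (t * L j))
      (∑ j, L j ^ (k + 1) * Real.exp (t * L j)) t := by
  refine HasDerivAt.fun_sum fun j _ => ?_
  have h := (((hasDerivAt_id t).mul_const (L j)).exp).const_mul (L j ^ k)
  refine h.congr_deriv ?_
  simp only [id]
  ring

/-- Second-order (cumulant) expansion of the log-mean-exponential: with
`μ = (1/n) · ∑ j, L j` and `σ² = (1/n) · ∑ j, (L j − μ)²`, the quantity
`λ · (λ · log((1/n) · ∑ j, exp (L j / λ)) − μ)` tends to `σ²/2` as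
`λ → +∞`; equivalently
`λ · log((1/n) · ∑ j, exp (L j / λ)) = μ + σ²/(2λ) + o(1/λ)`. -/
theorem stmt15 (n : ℕ) (hn : 1 ≤ n) (L : Fin n → ℝ) (μ σ2 : ℝ)
    (hμ : μ = (1 / (n : ℝ)) * ∑ j, L j)
    (hσ : σ2 = (1 / (n : ℝ)) * ∑ j, (L j - μ) ^ 2) :
    Filter.Tendsto
      (fun lam : ℝ =>
        lam * (lam * Real.log ((1 / (n : ℝ)) * ∑ j, Real.exp (L j / lam)) - μ))
      Filter.atTop (nhds (σ2 / 2)) := by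
  have hn0 : (n : ℝ) ≠ 0 := by positivity
  have : Nonempty (Fin n) := ⟨⟨0, hn⟩⟩
  let S : ℕ → ℝ → ℝ := fun k t => ∑ j, L j ^ k * Real.exp (t * L j)
  have hS : ∀ k t, HasDerivAt (S k) (S (k + 1) t) t := hasDerivAt_sum_pow_mul_exp L
  have hpos : ∀ t, 0 < S 0 t := fun t =>
    Finset.sum_pos (fun j _ => by positivity) Finset.univ_nonempty
  have hS0 : S 0 0 = n := by simp [S]
  have hS1 : S 1 0 = n * μ := by simp [S, hμ, hn0]
  have hS2 : S 2 0 = n * (σ2 + μ ^ 2) := by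
    have hsum : ∑ j, L j = n * μ := by simp [hμ, hn0]
    have hexp : ∑ j, (L j - μ) ^ 2 = ∑ j, L j ^ 2 - n * μ ^ 2 := by
      simp only [sub_sq, Finset.sum_add_distrib, Finset.sum_sub_distrib, ← Finset.sum_mul,
        ← Finset.mul_sum, hsum, Finset.sum_const, Finset.card_univ, Fintype.card_fin, nsmul_eq_mul]
      ring
    rw [hσ, hexp]
    simp only [S, zero_mul, Real.exp_zero, mul_one]
    field_simp
    ring
  let K : ℝ → ℝ := fun t => Real.log ((1 / (n : ℝ)) * S 0 t) - μ * t
  let K' : ℝ → ℝ := fun t => S 1 t / S 0 t - μ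
  have hK : ∀ t, HasDerivAt K (K' t) t := by
    intro t
    have hne := (hpos t).ne'
    have h1 := ((hS 0 t).const_mul (1 / (n : ℝ))).log (by positivity)
    refine (h1.sub ((hasDerivAt_id t).const_mul μ)).congr_deriv ?_
    simp only [K', zero_add]
    field_simp
  have hK0 : K 0 = 0 := by simp [K, hS0, hn0]
  have hK'0 : K' 0 = 0 := by simp [K', hS0, hS1, hn0]
  have hK' : HasDerivAt K' σ2 0 := by
    refine (((hS 1 0).div (hS 0 0) (hpos 0).ne').sub_const μ).congr_deriv ?_
    simp only [zero_add, Nat.reduceAdd, hS0, hS1, hS2]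
    field_simp
    ring
  have hquot : Filter.Tendsto (fun t => K' t / (2 * t)) (nhdsWithin 0 (Set.Ioi 0))
      (nhds (σ2 / 2)) := by
    have h := (hasDerivAt_iff_tendsto_slope_zero.1 hK').mono_left
      (nhdsWithin_mono 0 fun t (ht : 0 < t) => ht.ne')
    refine (h.div_const 2).congr fun t => ?_
    simp only [zero_add, hK'0, sub_zero, smul_eq_mul]
    rw [mul_comm 2 t, ← div_div, div_eq_inv_mul (K' t) t]
  have hlim : Filter.Tendsto (fun t => K t / t ^ 2) (nhdsWithin 0 (Set.Ioi 0))
      (nhds (σ2 / 2)) := by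
    refine HasDerivAt.lhopital_zero_nhdsGT (f' := K') (g' := fun t => 2 * t)
      (Filter.Eventually.of_forall hK) (Filter.Eventually.of_forall fun t => ?_) ?_ ?_ ?_ hquot
    · simpa using hasDerivAt_pow 2 t
    · filter_upwards [self_mem_nhdsWithin] with t ht
      exact mul_ne_zero two_ne_zero (ne_of_gt ht)
    · have h := (hK 0).continuousAt.tendsto
      rw [hK0] at h
      exact h.mono_left nhdsWithin_le_nhds
    · have h := (continuous_pow (M := ℝ) 2).tendsto 0
      rw [zero_pow two_ne_zero] at h
      exact h.mono_left nhdsWithin_le_nhds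
  refine (hlim.comp tendsto_inv_atTop_nhdsGT_zero).congr' ?_
  filter_upwards [Filter.eventually_gt_atTop 0] with lam hlam
  have hsum : S 0 lam⁻¹ = ∑ j, Real.exp (L j / lam) := by
    simp [S, div_eq_inv_mul]
  simp only [Function.comp, K, hsum]
  field_simp
end
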